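/- Let n ≥ 2 and γ ∈ (0,1). There exists a constant C > 0, depending only on n and γ, such that for every Schwartz function f : ℝⁿ → ℝ, | ∫_{ℝⁿ} (Λ^γ f(0) − Λ^γ f(x)) e^{−|x|} / |x|^n dx | ≤ C ∫_{ℝⁿ} |f(0) − f(x)| · ln(e + 1/|x|) / |x|^{n+γ} dx, where Λ^γ f(x) := ∫_{ℝⁿ} (f(x) − f(x+y)) / |y|^{n+γ} dy. -/

import Mathlib

open MeasureTheory

namespace DWI
open Set

noncomputable def cn (n : ℕ) : ℝ :=
  n * (volume : Measure (EuclideanSpace ℝ (Fin n))).real (Metric.ball 0 1)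

lemma cn_nonneg (n : ℕ) : 0 ≤ cn n := by unfold cn; positivity

lemma radial (n : ℕ) (hn : 2 ≤ n) (S : Set ℝ) (hS : MeasurableSet S) (hS0 : S ⊆ Ioi 0)
    (u v : ℝ → ℝ) (huv : ∀ t ∈ S, t ^ (n - 1) * u t = v t) (hv : IntegrableOn v S) :
    Integrable (fun x : EuclideanSpace ℝ (Fin n) => S.indicator u ‖x‖) ∧
    ∫ x : EuclideanSpace ℝ (Fin n), S.indicator u ‖x‖ = cn n * ∫ t in S, v t := by
  have : Nontrivial (EuclideanSpace ℝ (Fin n)) := by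
    have : Nonempty (Fin n) := ⟨⟨0, by omega⟩⟩
    infer_instance
  have key : (fun y : ℝ => y ^ (n - 1) • S.indicator u y) = S.indicator v := by
    funext y
    by_cases hy : y ∈ S
    · simp [hy, huv y hy]
    · simp [hy]
  constructor
  · rw [integrable_fun_norm_addHaar, finrank_euclideanSpace_fin, key]
    exact (hv.integrable_indicator hS).integrableOn
  · rw [integral_fun_norm_addHaar, finrank_euclideanSpace_fin, key,
      setIntegral_indicator hS, inter_eq_right.mpr hS0]
    simp [cn, mul_assoc]

lemma pow_pred (n : ℕ) (hn : 2 ≤ n) (t : ℝ) : t ^ (n - 1) = t ^ ((n : ℝ) - 1) := by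
  rw [← Real.rpow_natCast]
  congr 1
  rw [Nat.cast_sub (by omega)]; simp

lemma U1 (n : ℕ) (hn : 2 ≤ n) (m : ℝ) (hm : 0 < m) :
    Integrable (fun x : EuclideanSpace ℝ (Fin n) =>
      (Ici m).indicator (fun t => t ^ (-(n : ℝ)) * (1 + t)⁻¹) ‖x‖) ∧
    ∫ x : EuclideanSpace ℝ (Fin n), (Ici m).indicator (fun t => t ^ (-(n : ℝ)) * (1 + t)⁻¹) ‖x‖
      = cn n * Real.log (1 + 1 / m) := by
  have hd : ∀ x ∈ Ici m, HasDerivAt (fun t : ℝ => Real.log t - Real.log (1 + t))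
      (x⁻¹ * (1 + x)⁻¹) x := by
    intro x hx
    have hx0 : 0 < x := lt_of_lt_of_le hm hx
    have h1 := (Real.hasDerivAt_log hx0.ne')
    have h2 := ((hasDerivAt_id x).const_add 1).log (by simp; positivity)
    convert! h1.sub h2 using 1
    simp
    field_simp
    ring
  have ht : Filter.Tendsto (fun t : ℝ => Real.log t - Real.log (1 + t)) Filter.atTop (nhds 0) := by
    have h1 : Filter.Tendsto (fun t : ℝ => -Real.log (1 + t⁻¹)) Filter.atTop (nhds 0) := by
      have h0 : Filter.Tendsto (fun t : ℝ => 1 + t⁻¹) Filter.atTop (nhds 1) := by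
        simpa using tendsto_inv_atTop_zero.const_add (1 : ℝ)
      simpa using (h0.log one_ne_zero).neg
    refine h1.congr' ?_
    filter_upwards [Filter.eventually_gt_atTop 0] with t ht
    rw [show 1 + t⁻¹ = (1 + t) / t by field_simp; ring, Real.log_div (by positivity) ht.ne']
    ring
  have hpos : ∀ x ∈ Ioi m, 0 ≤ x⁻¹ * (1 + x)⁻¹ := by
    intro x hx
    have hx0 : 0 < x := lt_trans hm hx
    positivity
  have hi := integrableOn_Ioi_deriv_of_nonneg' hd hpos ht
  have hv := integral_Ioi_of_hasDerivAt_of_tendsto' hd hi ht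
  have := radial n hn (Ici m) measurableSet_Ici (fun t ht => lt_of_lt_of_le hm ht)
    (fun t => t ^ (-(n : ℝ)) * (1 + t)⁻¹) (fun x => x⁻¹ * (1 + x)⁻¹) (by
      intro t ht
      have ht0 : 0 < t := lt_of_lt_of_le hm ht
      rw [pow_pred n hn, ← mul_assoc, ← Real.rpow_add ht0,
        show (n : ℝ) - 1 + -n = -1 by ring, Real.rpow_neg_one]) ((integrableOn_Ici_iff_integrableOn_Ioi (μ := volume)).mpr hi)
  refine ⟨this.1, ?_⟩
  rw [this.2, integral_Ici_eq_integral_Ioi, hv]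
  rw [show 1 + 1 / m = (1 + m) / m by field_simp; ring, Real.log_div (by positivity) hm.ne']
  ring

/-- powers on the outside -/
lemma Uout (n : ℕ) (hn : 2 ≤ n) (m : ℝ) (hm : 0 < m) (γ : ℝ) (hγ : 0 < γ) :
    Integrable (fun x : EuclideanSpace ℝ (Fin n) =>
      (Ici m).indicator (fun t => t ^ (-((n : ℝ) + γ))) ‖x‖) ∧
    ∫ x : EuclideanSpace ℝ (Fin n), (Ici m).indicator (fun t => t ^ (-((n : ℝ) + γ))) ‖x‖
      = cn n * (m ^ (-γ) / γ) := by
  have := radial n hn (Ici m) measurableSet_Ici (fun t ht => lt_of_lt_of_le hm ht)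
    (fun t => t ^ (-((n : ℝ) + γ))) (fun x => x ^ (-1 - γ)) (by
      intro t ht
      have ht0 : 0 < t := lt_of_lt_of_le hm ht
      rw [pow_pred n hn, ← Real.rpow_add ht0]
      congr 1; ring)
    ((integrableOn_Ici_iff_integrableOn_Ioi (μ := volume)).mpr (integrableOn_Ioi_rpow_of_lt (by linarith) hm))
  refine ⟨this.1, ?_⟩
  rw [this.2, integral_Ici_eq_integral_Ioi, integral_Ioi_rpow_of_lt (by linarith) hm]
  rw [show -1 - γ + 1 = -γ by ring, neg_div_neg_eq]

/-- powers on the inside -/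
lemma Uin (n : ℕ) (hn : 2 ≤ n) (m : ℝ) (hm : 0 < m) (a : ℝ) (ha : a < 1) :
    Integrable (fun x : EuclideanSpace ℝ (Fin n) =>
      (Ioo 0 m).indicator (fun t => t ^ (1 - ((n : ℝ) + a))) ‖x‖) ∧
    ∫ x : EuclideanSpace ℝ (Fin n), (Ioo 0 m).indicator (fun t => t ^ (1 - ((n : ℝ) + a))) ‖x‖
      = cn n * (m ^ (1 - a) / (1 - a)) := by
  have := radial n hn (Ioo 0 m) measurableSet_Ioo (fun t ht => ht.1)
    (fun t => t ^ (1 - ((n : ℝ) + a))) (fun x => x ^ (-a)) (by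
      intro t ht
      rw [pow_pred n hn, ← Real.rpow_add ht.1]
      congr 1; ring)
    ((intervalIntegral.integrableOn_Ioo_rpow_iff hm).mpr (by linarith))
  refine ⟨this.1, ?_⟩
  rw [this.2, ← integral_Ioc_eq_integral_Ioo, ← intervalIntegral.integral_of_le hm.le,
    integral_rpow (Or.inl (by linarith)), Real.zero_rpow (by linarith)]
  rw [show -a + 1 = 1 - a by ring, sub_zero]

lemma lip_rpow (p m a b : ℝ) (hp : 0 ≤ p) (hm : 0 < m) (ha : m ≤ a) (hb : m ≤ b) :
    |a ^ (-p) - b ^ (-p)| ≤ p * m ^ (-p - 1) * |a - b| := by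
  have := (convex_Ici m).norm_image_sub_le_of_norm_hasDerivWithin_le (f := fun t : ℝ => t ^ (-p))
    (f' := fun t => -p * t ^ (-p - 1)) (C := p * m ^ (-p - 1)) (x := b) (y := a) (fun x hx => by
      have hx0 : 0 < x := lt_of_lt_of_le hm hx
      exact (Real.hasDerivAt_rpow_const (Or.inl hx0.ne')).hasDerivWithinAt) (fun x hx => by
      have hx0 : 0 < x := lt_of_lt_of_le hm hx
      rw [norm_mul, norm_neg, Real.norm_of_nonneg hp, Real.norm_of_nonneg (by positivity)]
      gcongr ?_ * ?_
      exact Real.rpow_le_rpow_of_nonpos hm hx (by linarith)) hb ha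
  simpa using this

/-- radial profile of the weight -/
noncomputable def h (n : ℕ) (ε t : ℝ) : ℝ := Real.exp (-t) * (t + ε) ^ (-(n : ℝ))

lemma lip_h (n : ℕ) (ε m a b : ℝ) (hε : 0 < ε) (hm : 0 < m) (ha : m ≤ a) (hb : m ≤ b) :
    |h n ε a - h n ε b| ≤ (n + 1) * m ^ (-(n : ℝ) - 1) * |a - b| := by
  have := (convex_Ici m).norm_image_sub_le_of_norm_hasDerivWithin_le (f := h n ε)
    (f' := fun t => (Real.exp (-t) * (-1)) * (t + ε) ^ (-(n : ℝ)) +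
      Real.exp (-t) * (1 * (-(n : ℝ)) * (t + ε) ^ (-(n : ℝ) - 1)))
    (C := (n + 1) * m ^ (-(n : ℝ) - 1)) (x := b) (y := a) (fun x hx => by
      have hx0 : 0 < x := lt_of_lt_of_le hm hx
      have h1 : HasDerivAt (fun t : ℝ => Real.exp (-t)) (Real.exp (-x) * (-1)) x :=
        (hasDerivAt_neg x).exp
      have h2 : HasDerivAt (fun t : ℝ => (t + ε) ^ (-(n : ℝ)))
          (1 * (-(n : ℝ)) * (x + ε) ^ (-(n : ℝ) - 1)) x :=
        ((hasDerivAt_id x).add_const ε).rpow_const (Or.inl (by simp; positivity))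
      exact (h1.mul h2).hasDerivWithinAt) (fun x hx => by
      have hx0 : 0 < x := lt_of_lt_of_le hm hx
      have hmx : m ≤ x := hx
      have e1 : Real.exp (-x) ≤ x⁻¹ := by
        rw [Real.exp_neg]
        gcongr
        linarith [Real.add_one_le_exp x]
      have e2 : Real.exp (-x) ≤ 1 := by simp [hx0.le]
      have e3 : (x + ε) ^ (-(n : ℝ)) ≤ m ^ (-(n : ℝ)) :=
        Real.rpow_le_rpow_of_nonpos hm (by linarith) (by simp)
      have e4 : (x + ε) ^ (-(n : ℝ) - 1) ≤ m ^ (-(n : ℝ) - 1) :=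
        Real.rpow_le_rpow_of_nonpos hm (by linarith) (by
          have : (0 : ℝ) ≤ n := by positivity
          linarith)
      have e5 : x⁻¹ ≤ m⁻¹ := by gcongr
      have e6 : m ^ (-(n : ℝ) - 1) = m⁻¹ * m ^ (-(n : ℝ)) := by
        rw [Real.rpow_sub hm, Real.rpow_one]; field_simp
      refine (norm_add_le _ _).trans ?_
      have p1 : 0 ≤ (x + ε) ^ (-(n : ℝ)) := by positivity
      have p2 : 0 ≤ (x + ε) ^ (-(n : ℝ) - 1) := by positivity
      simp only [norm_mul, norm_neg, norm_one, Real.norm_of_nonneg p1, Real.norm_of_nonneg p2,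
        Real.norm_eq_abs, Real.abs_exp, Nat.abs_cast, mul_one, one_mul]
      have q1 : Real.exp (-x) * (x + ε) ^ (-(n : ℝ)) ≤ m ^ (-(n : ℝ) - 1) := by
        rw [e6]
        gcongr
        exact e1.trans e5
      have q2 : Real.exp (-x) * (n * (x + ε) ^ (-(n : ℝ) - 1)) ≤ 1 * (n * m ^ (-(n : ℝ) - 1)) := by
        gcongr
      linarith) hb ha
  simpa using this

lemma h_nonneg (n : ℕ) (ε t : ℝ) (hε : 0 < ε) (ht : 0 ≤ t) : 0 ≤ h n ε t := by
  unfold h; positivity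

lemma h_le (n : ℕ) (ε t : ℝ) (hε : 0 < ε) (ht : 0 < t) : h n ε t ≤ t ^ (-(n : ℝ)) * (1 + t)⁻¹ := by
  unfold h
  rw [mul_comm]
  gcongr ?_ * ?_
  · exact Real.rpow_le_rpow_of_nonpos ht (by linarith) (by simp)
  · rw [Real.exp_neg]
    gcongr
    linarith [Real.add_one_le_exp t]

lemma h_le' (n : ℕ) (ε t : ℝ) (hε : 0 < ε) (ht : 0 < t) : h n ε t ≤ t ^ (-(n : ℝ)) := by
  refine (h_le n ε t hε ht).trans (mul_le_of_le_one_right (by positivity) ?_)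
  exact inv_le_one_of_one_le₀ (by linarith)

/-- the symmetrised kernel -/
noncomputable def Q (n : ℕ) (γ ε : ℝ) (z x : EuclideanSpace ℝ (Fin n)) : ℝ :=
  h n ε ‖x‖ * ‖z‖ ^ (-((n : ℝ) + γ)) +
    (h n ε ‖z‖ - h n ε ‖x‖) * ‖z - x‖ ^ (-((n : ℝ) + γ))

/-- the dominating function -/
noncomputable def B (n : ℕ) (γ m : ℝ) (z x : EuclideanSpace ℝ (Fin n)) : ℝ :=
  2 * m ^ (-((n : ℝ) + γ)) * (Ici m).indicator (fun t => t ^ (-(n : ℝ)) * (1 + t)⁻¹) ‖x‖ +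
  (n + 1) * m ^ (-(n : ℝ) - 1) * (Ioo 0 m).indicator (fun t => t ^ (1 - ((n : ℝ) + γ))) ‖x - z‖ +
  m ^ (-(n : ℝ)) * (Ici m).indicator (fun t => t ^ (-((n : ℝ) + γ))) ‖x - z‖ +
  ((n : ℝ) + γ) * m ^ (-((n : ℝ) + γ) - 1) *
    (Ioo 0 m).indicator (fun t => t ^ (1 - ((n : ℝ) + 0))) ‖x‖

lemma integral_add4 {n : ℕ} {f1 f2 f3 f4 : EuclideanSpace ℝ (Fin n) → ℝ} (h1 : Integrable f1)
    (h2 : Integrable f2) (h3 : Integrable f3) (h4 : Integrable f4) :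
    ∫ x, (f1 x + f2 x + f3 x + f4 x) = ((∫ x, f1 x) + ∫ x, f2 x) + (∫ x, f3 x) + ∫ x, f4 x := by
  have a := integral_add' ((h1.add h2).add h3) h4
  have b := integral_add' (h1.add h2) h3
  have c := integral_add' h1 h2
  rw [← c, ← b, ← a]
  rfl

lemma B_int (n : ℕ) (hn : 2 ≤ n) (γ : ℝ) (hγ : γ ∈ Ioo (0 : ℝ) 1) (m : ℝ) (hm : 0 < m)
    (z : EuclideanSpace ℝ (Fin n)) :
    Integrable (B n γ m z) ∧
    ∫ x, B n γ m z x = cn n * m ^ (-((n : ℝ) + γ)) *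
      (2 * Real.log (1 + 1 / m) + ((n + 1) / (1 - γ) + 1 / γ + (n + γ))) := by
  obtain ⟨i1, v1⟩ := U1 n hn m hm
  obtain ⟨i2, v2⟩ := Uin n hn m hm γ hγ.2
  obtain ⟨i3, v3⟩ := Uout n hn m hm γ hγ.1
  obtain ⟨i4, v4⟩ := Uin n hn m hm 0 one_pos
  have j2 := i2.comp_sub_right z
  have j3 := i3.comp_sub_right z
  rw [← integral_sub_right_eq_self _ z] at v2 v3
  have k1 := i1.const_mul (2 * m ^ (-((n : ℝ) + γ)))
  have k2 := j2.const_mul ((n + 1) * m ^ (-(n : ℝ) - 1))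
  have k3 := j3.const_mul (m ^ (-(n : ℝ)))
  have k4 := i4.const_mul (((n : ℝ) + γ) * m ^ (-((n : ℝ) + γ) - 1))
  refine ⟨((k1.add k2).add k3).add k4, ?_⟩
  have s1 : ∫ x, B n γ m z x = _ := integral_add4 k1 k2 k3 k4
  rw [s1]
  simp only [integral_const_mul]
  rw [v1, v2, v3, v4]
  have e1 : m ^ (-(n : ℝ) - 1) * m ^ (1 - γ) = m ^ (-((n : ℝ) + γ)) := by
    rw [← Real.rpow_add hm]; congr 1; ring
  have e2 : m ^ (-(n : ℝ)) * m ^ (-γ) = m ^ (-((n : ℝ) + γ)) := by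
    rw [← Real.rpow_add hm]; congr 1; ring
  have e3 : m ^ (-((n : ℝ) + γ) - 1) * m ^ (1 - (0 : ℝ)) = m ^ (-((n : ℝ) + γ)) := by
    rw [← Real.rpow_add hm]; congr 1; ring
  calc _ = cn n * (m ^ (-((n : ℝ) + γ)) * 2 * Real.log (1 + 1 / m) +
        (m ^ (-(n : ℝ) - 1) * m ^ (1 - γ)) * ((n + 1) / (1 - γ)) +
        (m ^ (-(n : ℝ)) * m ^ (-γ)) * (1 / γ) +
        (m ^ (-((n : ℝ) + γ) - 1) * m ^ (1 - (0 : ℝ))) * (n + γ)) := by ring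
    _ = _ := by rw [e1, e2, e3]; ring

lemma Q_le_B (n : ℕ) (γ : ℝ) (hγ : γ ∈ Ioo (0 : ℝ) 1) (ε m : ℝ) (hε : 0 < ε)
    (hm : 0 < m) (z x : EuclideanSpace ℝ (Fin n)) (hz : ‖z‖ = 2 * m) (hx : x ≠ 0) (hxz : x ≠ z) :
    |Q n γ ε z x| ≤ B n γ m z x := by
  have hγ0 := hγ.1
  have hx0 : 0 < ‖x‖ := norm_pos_iff.mpr hx
  have hxz0 : 0 < ‖x - z‖ := norm_pos_iff.mpr (sub_ne_zero.mpr hxz)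
  have hn0 : (0 : ℝ) ≤ n := by positivity
  have hz0 : 0 < ‖z‖ := by linarith
  have kz : ‖z‖ ^ (-((n : ℝ) + γ)) ≤ m ^ (-((n : ℝ) + γ)) :=
    Real.rpow_le_rpow_of_nonpos hm (by linarith) (by linarith)
  have hWx := h_le n ε ‖x‖ hε hx0
  have hWx' := h_le' n ε ‖x‖ hε hx0
  have hWx0 := h_nonneg n ε ‖x‖ hε hx0.le
  have hWz0 := h_nonneg n ε ‖z‖ hε hz0.le
  have hWz : h n ε ‖z‖ ≤ m ^ (-(n : ℝ)) :=
    (h_le' n ε ‖z‖ hε hz0).trans (Real.rpow_le_rpow_of_nonpos hm (by linarith) (by simp))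
  have tri : ‖z‖ ≤ ‖x‖ + ‖x - z‖ := by
    have := norm_sub_le x (x - z)
    simpa using this
  have tri2 : |‖z‖ - ‖x‖| ≤ ‖x - z‖ := by
    rw [norm_sub_rev]; exact abs_norm_sub_norm_le z x
  unfold Q B
  rw [norm_sub_rev z x]
  have kp : 0 ≤ ‖x - z‖ ^ (-((n : ℝ) + γ)) := by positivity
  have kzp : 0 ≤ ‖z‖ ^ (-((n : ℝ) + γ)) := by positivity
  have kmp : 0 ≤ m ^ (-((n : ℝ) + γ)) := by positivity
  have hu : 0 ≤ ‖x‖ ^ (-(n : ℝ)) * (1 + ‖x‖)⁻¹ := by positivity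
  by_cases h1 : ‖x - z‖ < m
  · have h2 : m ≤ ‖x‖ := by linarith
    have a1 : ‖x - z‖ ∈ Ioo 0 m := ⟨hxz0, h1⟩
    have a2 : ‖x - z‖ ∉ Ici m := not_le.mpr h1
    have a3 : ‖x‖ ∈ Ici m := h2
    have a4 : ‖x‖ ∉ Ioo 0 m := fun hh => absurd hh.2 (not_lt.mpr h2)
    rw [indicator_of_mem a1, indicator_of_notMem a2, indicator_of_mem a3, indicator_of_notMem a4]
    have l := lip_h n ε m ‖z‖ ‖x‖ hε hm (by linarith) h2
    have l2 : |h n ε ‖z‖ - h n ε ‖x‖| ≤ (n + 1) * m ^ (-(n : ℝ) - 1) * ‖x - z‖ := by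
      refine l.trans ?_
      gcongr
    have e : ‖x - z‖ ^ (1 - ((n : ℝ) + γ)) = ‖x - z‖ * ‖x - z‖ ^ (-((n : ℝ) + γ)) := by
      rw [sub_eq_add_neg 1 ((n : ℝ) + γ), Real.rpow_add hxz0, Real.rpow_one]
    refine (abs_add_le _ _).trans ?_
    rw [abs_mul, abs_mul, abs_of_nonneg hWx0, abs_of_nonneg kzp, abs_of_nonneg kp, e]
    have b1 : h n ε ‖x‖ * ‖z‖ ^ (-((n : ℝ) + γ)) ≤
      (‖x‖ ^ (-(n : ℝ)) * (1 + ‖x‖)⁻¹) * m ^ (-((n : ℝ) + γ)) := mul_le_mul hWx kz kzp hu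
    have b2 := mul_le_mul_of_nonneg_right l2 kp
    have b3 := mul_nonneg hu kmp
    nlinarith
  · have h1' : m ≤ ‖x - z‖ := not_lt.mp h1
    have a1 : ‖x - z‖ ∉ Ioo 0 m := fun hh => h1 hh.2
    have a2 : ‖x - z‖ ∈ Ici m := h1'
    rw [indicator_of_notMem a1, indicator_of_mem a2]
    have b0 : h n ε ‖z‖ * ‖x - z‖ ^ (-((n : ℝ) + γ)) ≤
      m ^ (-(n : ℝ)) * ‖x - z‖ ^ (-((n : ℝ) + γ)) := by gcongr
    have b0' := mul_nonneg hWz0 kp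
    by_cases h2 : ‖x‖ < m
    · have a3 : ‖x‖ ∉ Ici m := not_le.mpr h2
      have a4 : ‖x‖ ∈ Ioo 0 m := ⟨hx0, h2⟩
      rw [indicator_of_notMem a3, indicator_of_mem a4]
      have l := lip_rpow ((n : ℝ) + γ) m ‖z‖ ‖x - z‖ (by linarith) hm (by linarith) h1'
      have t3 : |‖z‖ - ‖x - z‖| ≤ ‖x‖ := by
        have := abs_norm_sub_norm_le z (z - x)
        rw [norm_sub_rev z x] at this
        simpa using this
      have l2 : |‖z‖ ^ (-((n : ℝ) + γ)) - ‖x - z‖ ^ (-((n : ℝ) + γ))| ≤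
          ((n : ℝ) + γ) * m ^ (-((n : ℝ) + γ) - 1) * ‖x‖ := by
        refine l.trans ?_
        gcongr
      have e : ‖x‖ ^ (1 - ((n : ℝ) + 0)) = ‖x‖ * ‖x‖ ^ (-(n : ℝ)) := by
        rw [add_zero, sub_eq_add_neg, Real.rpow_add hx0, Real.rpow_one]
      have b1 : |h n ε ‖x‖ * (‖z‖ ^ (-((n : ℝ) + γ)) - ‖x - z‖ ^ (-((n : ℝ) + γ)))| ≤
          ‖x‖ ^ (-(n : ℝ)) * (((n : ℝ) + γ) * m ^ (-((n : ℝ) + γ) - 1) * ‖x‖) := by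
        rw [abs_mul, abs_of_nonneg hWx0]
        gcongr
      rw [e]
      calc _ = |h n ε ‖x‖ * (‖z‖ ^ (-((n : ℝ) + γ)) - ‖x - z‖ ^ (-((n : ℝ) + γ))) +
            h n ε ‖z‖ * ‖x - z‖ ^ (-((n : ℝ) + γ))| := by congr 1; ring
        _ ≤ _ := abs_add_le _ _
        _ ≤ _ := by
          rw [abs_of_nonneg b0']
          linarith
    · have h2' : m ≤ ‖x‖ := not_lt.mp h2
      have a3 : ‖x‖ ∈ Ici m := h2'
      have a4 : ‖x‖ ∉ Ioo 0 m := fun hh => h2 hh.2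
      rw [indicator_of_mem a3, indicator_of_notMem a4]
      have kxz : ‖x - z‖ ^ (-((n : ℝ) + γ)) ≤ m ^ (-((n : ℝ) + γ)) :=
        Real.rpow_le_rpow_of_nonpos hm h1' (by linarith)
      have b1 : h n ε ‖x‖ * ‖z‖ ^ (-((n : ℝ) + γ)) ≤
        (‖x‖ ^ (-(n : ℝ)) * (1 + ‖x‖)⁻¹) * m ^ (-((n : ℝ) + γ)) := mul_le_mul hWx kz kzp hu
      have b2 : h n ε ‖x‖ * ‖x - z‖ ^ (-((n : ℝ) + γ)) ≤
        (‖x‖ ^ (-(n : ℝ)) * (1 + ‖x‖)⁻¹) * m ^ (-((n : ℝ) + γ)) := mul_le_mul hWx kxz kp hu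
      have b3 := mul_nonneg hWx0 kzp
      have b4 := mul_nonneg hWx0 kp
      have b5 := mul_nonneg hu kmp
      rw [abs_le]
      constructor <;> nlinarith

lemma cont_h (n : ℕ) (ε : ℝ) (hε : 0 < ε) :
    Continuous (fun x : EuclideanSpace ℝ (Fin n) => h n ε ‖x‖) := by
  unfold h
  refine Continuous.mul (by fun_prop) ?_
  refine Continuous.rpow_const (by fun_prop) (fun x => Or.inl ?_)
  positivity

lemma meas_Q (n : ℕ) (γ ε : ℝ) (hε : 0 < ε) :
    Measurable (fun q : EuclideanSpace ℝ (Fin n) × EuclideanSpace ℝ (Fin n) => Q n γ ε q.1 q.2) := by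
  have := (cont_h n ε hε).measurable
  have m1 : Measurable (fun q : EuclideanSpace ℝ (Fin n) × EuclideanSpace ℝ (Fin n) =>
    h n ε ‖q.1‖) := this.comp measurable_fst
  have m2 : Measurable (fun q : EuclideanSpace ℝ (Fin n) × EuclideanSpace ℝ (Fin n) =>
    h n ε ‖q.2‖) := this.comp measurable_snd
  unfold Q
  refine (m2.mul ?_).add ((m1.sub m2).mul ?_)
  · exact (measurable_fst.norm).pow_const _
  · exact ((measurable_fst.sub measurable_snd).norm).pow_const _

lemma one_le_L (t : ℝ) (ht : 0 ≤ t) : 1 ≤ Real.log (Real.exp 1 + 1 / t) := by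
  rw [Real.le_log_iff_exp_le (by positivity)]
  have : 0 ≤ 1 / t := by positivity
  linarith

lemma kernel_bound (n : ℕ) (hn : 2 ≤ n) (γ : ℝ) (hγ : γ ∈ Ioo (0 : ℝ) 1) :
    ∃ C > (0 : ℝ), ∀ ε > (0 : ℝ), ∀ z : EuclideanSpace ℝ (Fin n), z ≠ 0 →
      Integrable (Q n γ ε z) ∧ ∫ x, ‖Q n γ ε z x‖ ≤
        C * (Real.log (Real.exp 1 + 1 / ‖z‖) * ‖z‖ ^ (-((n : ℝ) + γ))) := by
  have hγ0 := hγ.1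
  have hγ1 : 0 < 1 - γ := by linarith [hγ.2]
  obtain ⟨D, hD⟩ : ∃ D : ℝ, D = (n + 1) / (1 - γ) + 1 / γ + (n + γ) := ⟨_, rfl⟩
  have hD0 : 0 < D := by rw [hD]; positivity
  refine ⟨cn n * 2 ^ ((n : ℝ) + γ) * (4 + D) + 1, by have := cn_nonneg n; positivity, ?_⟩
  intro ε hε z hz
  have hz0 : 0 < ‖z‖ := norm_pos_iff.mpr hz
  obtain ⟨m, hm⟩ : ∃ m : ℝ, m = ‖z‖ / 2 := ⟨_, rfl⟩
  have hm0 : 0 < m := by rw [hm]; positivity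
  have hzm : ‖z‖ = 2 * m := by rw [hm]; ring
  have : Nontrivial (EuclideanSpace ℝ (Fin n)) := ⟨z, 0, hz⟩
  have hae : ∀ᵐ x : EuclideanSpace ℝ (Fin n), ‖Q n γ ε z x‖ ≤ B n γ m z x := by
    filter_upwards [Measure.ae_ne volume (0 : EuclideanSpace ℝ (Fin n)), Measure.ae_ne volume z]
      with x h1 h2
    exact Q_le_B n γ hγ ε m hε hm0 z x hzm h1 h2
  obtain ⟨bi, bv⟩ := B_int n hn γ hγ m hm0 z
  have hQm : Measurable (Q n γ ε z) := by
    have hh : Measurable (fun x : EuclideanSpace ℝ (Fin n) => (z, x)) := by fun_prop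
    have h2 := (meas_Q n γ ε hε).comp hh
    exact h2
  have hQi : Integrable (Q n γ ε z) := bi.mono' hQm.aestronglyMeasurable hae
  refine ⟨hQi, (integral_mono_ae hQi.norm bi hae).trans ?_⟩
  rw [bv]
  have hL := one_le_L ‖z‖ hz0.le
  have hl : Real.log (1 + 1 / m) ≤ 2 * Real.log (Real.exp 1 + 1 / ‖z‖) := by
    have e1 : 1 + 1 / m ≤ Real.exp 1 * (Real.exp 1 + 1 / ‖z‖) := by
      have : 2 ≤ Real.exp 1 := by linarith [Real.add_one_le_exp 1]
      have h3 : 1 / m = 2 * (1 / ‖z‖) := by rw [hm]; field_simp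
      have h4 : 0 < 1 / ‖z‖ := by positivity
      rw [h3]
      nlinarith
    have := Real.log_le_log (by positivity) e1
    rw [Real.log_mul (by positivity) (by positivity), Real.log_exp] at this
    linarith
  have e2 : m ^ (-((n : ℝ) + γ)) = 2 ^ ((n : ℝ) + γ) * ‖z‖ ^ (-((n : ℝ) + γ)) := by
    rw [hm, Real.div_rpow hz0.le (by norm_num), Real.rpow_neg (by norm_num : (0 : ℝ) ≤ 2)]
    field_simp
  rw [e2, ← hD]
  generalize Real.log (Real.exp 1 + 1 / ‖z‖) = L at *
  have hc := cn_nonneg n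
  have h5 : 2 * Real.log (1 + 1 / m) + D ≤ (4 + D) * L := by nlinarith
  have h6 : 0 ≤ L * ‖z‖ ^ (-((n : ℝ) + γ)) := by positivity
  calc _ ≤ cn n * (2 ^ ((n : ℝ) + γ) * ‖z‖ ^ (-((n : ℝ) + γ))) * ((4 + D) * L) := by gcongr
    _ = (cn n * 2 ^ ((n : ℝ) + γ) * (4 + D)) * (L * ‖z‖ ^ (-((n : ℝ) + γ))) := by ring
    _ ≤ _ := mul_le_mul_of_nonneg_right (by linarith) h6

lemma schwartz_bd (n : ℕ) (f : SchwartzMap (EuclideanSpace ℝ (Fin n)) ℝ) :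
    ∃ M : ℝ, 0 ≤ M ∧ ∀ a b, |f a - f b| ≤ M * min 1 ‖a - b‖ := by
  have h0 := f.norm_le_seminorm ℝ
  have h1 := f.norm_iteratedFDeriv_le_seminorm ℝ 1
  set A := SchwartzMap.seminorm ℝ 0 0 f
  set D := SchwartzMap.seminorm ℝ 0 1 f
  have hA : 0 ≤ A := (norm_nonneg _).trans (h0 0)
  have hD : 0 ≤ D := (norm_nonneg _).trans (h1 0)
  refine ⟨2 * A + D, by positivity, fun a b => ?_⟩
  have k1 : |f a - f b| ≤ 2 * A := by
    have := norm_sub_le (f a) (f b)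
    rw [Real.norm_eq_abs] at this
    linarith [h0 a, h0 b]
  have k2 : |f a - f b| ≤ D * ‖a - b‖ := by
    refine convex_univ.norm_image_sub_le_of_norm_fderiv_le (𝕜 := ℝ) (f := f)
      (fun x _ => f.differentiableAt) (fun x _ => ?_) (mem_univ b) (mem_univ a)
    rw [← norm_iteratedFDeriv_one]
    exact h1 x
  rcases min_cases 1 ‖a - b‖ with ⟨h, _⟩ | ⟨h, _⟩
  · rw [h]; linarith
  · rw [h]; nlinarith [norm_nonneg (a - b)]

lemma mf_int (n : ℕ) (hn : 2 ≤ n) (γ : ℝ) (hγ : γ ∈ Ioo (0 : ℝ) 1) :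
    Integrable (fun y : EuclideanSpace ℝ (Fin n) => min 1 ‖y‖ * ‖y‖ ^ (-((n : ℝ) + γ))) := by
  have : Nontrivial (EuclideanSpace ℝ (Fin n)) := by
    have : Nonempty (Fin n) := ⟨⟨0, by omega⟩⟩
    infer_instance
  refine ((Uin n hn 1 one_pos γ hγ.2).1.add (Uout n hn 1 one_pos γ hγ.1).1).mono'
    (by
      refine Measurable.aestronglyMeasurable ?_
      exact (measurable_const.min measurable_norm).mul (measurable_norm.pow_const _)) ?_
  filter_upwards [Measure.ae_ne volume (0 : EuclideanSpace ℝ (Fin n))] with y hy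
  have hy0 : 0 < ‖y‖ := norm_pos_iff.mpr hy
  rw [Real.norm_of_nonneg (by positivity)]
  simp only [Pi.add_apply]
  by_cases h1 : ‖y‖ < 1
  · rw [indicator_of_mem (show ‖y‖ ∈ Ioo 0 1 from ⟨hy0, h1⟩),
      indicator_of_notMem (show ‖y‖ ∉ Ici 1 from not_le.mpr h1), min_eq_right h1.le,
      sub_eq_add_neg, Real.rpow_add hy0, Real.rpow_one, add_zero]
  · rw [indicator_of_notMem (show ‖y‖ ∉ Ioo 0 1 from fun h => h1 h.2),
      indicator_of_mem (show ‖y‖ ∈ Ici 1 from not_lt.mp h1), min_eq_left (not_lt.mp h1)]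
    simp

lemma rhs_int (n : ℕ) (hn : 2 ≤ n) (γ : ℝ) (hγ : γ ∈ Ioo (0 : ℝ) 1)
    (f : SchwartzMap (EuclideanSpace ℝ (Fin n)) ℝ) :
    Integrable (fun z : EuclideanSpace ℝ (Fin n) =>
      |f 0 - f z| * (Real.log (Real.exp 1 + 1 / ‖z‖) * ‖z‖ ^ (-((n : ℝ) + γ)))) := by
  have : Nontrivial (EuclideanSpace ℝ (Fin n)) := by
    have : Nonempty (Fin n) := ⟨⟨0, by omega⟩⟩
    infer_instance
  obtain ⟨M, hM, hf⟩ := schwartz_bd n f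
  have hγ1 := hγ.2
  obtain ⟨δ, hδ⟩ : ∃ δ, δ = (1 - γ) / 2 := ⟨_, rfl⟩
  have hδ0 : 0 < δ := by rw [hδ]; linarith
  have i1 := (Uin n hn 1 one_pos (γ + δ) (by rw [hδ]; linarith)).1.const_mul
    (M * ((Real.exp 1 + 1) ^ δ / δ))
  have i2 := (Uout n hn 1 one_pos γ hγ.1).1.const_mul (M * Real.exp 1)
  refine (i1.add i2).mono' (by
      refine Measurable.aestronglyMeasurable ?_
      have := f.continuous.measurable
      refine Measurable.mul (by fun_prop) (Measurable.mul ?_ (measurable_norm.pow_const _))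
      exact Real.measurable_log.comp (by fun_prop)) ?_
  filter_upwards [Measure.ae_ne volume (0 : EuclideanSpace ℝ (Fin n))] with z hz
  have hz0 : 0 < ‖z‖ := norm_pos_iff.mpr hz
  have hL := one_le_L ‖z‖ hz0.le
  have hk : 0 ≤ ‖z‖ ^ (-((n : ℝ) + γ)) := by positivity
  have hfz := hf 0 z
  rw [zero_sub, norm_neg] at hfz
  rw [Real.norm_of_nonneg (by positivity)]
  simp only [Pi.add_apply]
  by_cases h1 : ‖z‖ < 1
  · rw [indicator_of_mem (show ‖z‖ ∈ Ioo 0 1 from ⟨hz0, h1⟩),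
      indicator_of_notMem (show ‖z‖ ∉ Ici 1 from not_le.mpr h1)]
    rw [min_eq_right h1.le] at hfz
    have l1 : Real.log (Real.exp 1 + 1 / ‖z‖) ≤ (Real.exp 1 + 1) ^ δ / δ * ‖z‖ ^ (-δ) := by
      refine (Real.log_le_rpow_div (by positivity) hδ0).trans ?_
      have : Real.exp 1 + 1 / ‖z‖ ≤ (Real.exp 1 + 1) / ‖z‖ := by
        rw [add_div]
        gcongr
        rw [le_div_iff₀ hz0]
        nlinarith [Real.exp_pos 1]
      have h2 : (Real.exp 1 + 1 / ‖z‖) ^ δ ≤ ((Real.exp 1 + 1) / ‖z‖) ^ δ := by gcongr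
      rw [Real.div_rpow (by positivity) hz0.le] at h2
      calc _ ≤ _ := div_le_div_of_nonneg_right h2 hδ0.le
        _ = _ := by rw [Real.rpow_neg hz0.le]; ring
    have e : ‖z‖ ^ (1 - ((n : ℝ) + (γ + δ))) = ‖z‖ * (‖z‖ ^ (-δ) * ‖z‖ ^ (-((n : ℝ) + γ))) := by
      rw [← Real.rpow_add hz0, ← Real.rpow_one_add' hz0.le]
      · congr 1; ring
      · have : (2 : ℝ) ≤ n := by exact_mod_cast hn
        have := hγ.1
        linarith
    rw [e]
    calc _ ≤ (M * ‖z‖) * (((Real.exp 1 + 1) ^ δ / δ * ‖z‖ ^ (-δ)) * ‖z‖ ^ (-((n : ℝ) + γ))) := by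
          gcongr
      _ = _ := by ring
  · have h1' := not_lt.mp h1
    rw [indicator_of_notMem (show ‖z‖ ∉ Ioo 0 1 from fun h => h1 h.2),
      indicator_of_mem (show ‖z‖ ∈ Ici 1 from h1')]
    rw [min_eq_left h1'] at hfz
    have l1 : Real.log (Real.exp 1 + 1 / ‖z‖) ≤ Real.exp 1 := by
      refine (Real.log_le_sub_one_of_pos (by positivity)).trans ?_
      have : 1 / ‖z‖ ≤ 1 := by rw [div_le_one hz0]; exact h1'
      linarith
    calc _ ≤ (M * 1) * (Real.exp 1 * ‖z‖ ^ (-((n : ℝ) + γ))) := by gcongr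
      _ = _ := by ring

lemma W_int (n : ℕ) (hn : 2 ≤ n) (ε : ℝ) (hε : 0 < ε) :
    Integrable (fun x : EuclideanSpace ℝ (Fin n) => h n ε ‖x‖) := by
  have : Nontrivial (EuclideanSpace ℝ (Fin n)) := by
    have : Nonempty (Fin n) := ⟨⟨0, by omega⟩⟩
    infer_instance
  have hn' : (0 : ℝ) < n := by exact_mod_cast (by omega : 0 < n)
  have i := (radial n hn (Ioi 0) measurableSet_Ioi (fun t ht => ht) (fun t => Real.exp (-t))
    (fun t => Real.exp (-t) * t ^ ((n : ℝ) - 1)) (fun t ht => by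
      rw [pow_pred n hn, mul_comm]) (Real.GammaIntegral_convergent hn')).1.const_mul (ε ^ (-(n : ℝ)))
  refine i.mono' (cont_h n ε hε).aestronglyMeasurable ?_
  filter_upwards [Measure.ae_ne volume (0 : EuclideanSpace ℝ (Fin n))] with x hx
  have hx0 : 0 < ‖x‖ := norm_pos_iff.mpr hx
  rw [Real.norm_of_nonneg (h_nonneg n ε _ hε hx0.le),
    indicator_of_mem (show ‖x‖ ∈ Ioi 0 from hx0)]
  unfold h
  rw [mul_comm]
  gcongr ?_ * _
  exact Real.rpow_le_rpow_of_nonpos hε (by linarith) (by simp)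

lemma approx (n : ℕ) (hn : 2 ≤ n) (γ : ℝ) (hγ : γ ∈ Ioo (0 : ℝ) 1) :
    ∃ C > (0 : ℝ), ∀ (f : SchwartzMap (EuclideanSpace ℝ (Fin n)) ℝ), ∀ ε > (0 : ℝ),
      Integrable (fun x : EuclideanSpace ℝ (Fin n) =>
          ((∫ y : EuclideanSpace ℝ (Fin n), (f 0 - f (0 + y)) / ‖y‖ ^ ((n : ℝ) + γ)) -
            ∫ y : EuclideanSpace ℝ (Fin n), (f x - f (x + y)) / ‖y‖ ^ ((n : ℝ) + γ)) *
          h n ε ‖x‖) ∧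
      |∫ x : EuclideanSpace ℝ (Fin n),
          ((∫ y : EuclideanSpace ℝ (Fin n), (f 0 - f (0 + y)) / ‖y‖ ^ ((n : ℝ) + γ)) -
            ∫ y : EuclideanSpace ℝ (Fin n), (f x - f (x + y)) / ‖y‖ ^ ((n : ℝ) + γ)) *
          h n ε ‖x‖| ≤
        C * ∫ z : EuclideanSpace ℝ (Fin n),
          |f 0 - f z| * (Real.log (Real.exp 1 + 1 / ‖z‖) * ‖z‖ ^ (-((n : ℝ) + γ))) := by
  obtain ⟨C, hC, hK⟩ := kernel_bound n hn γ hγ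
  refine ⟨C, hC, fun f ε hε => ?_⟩
  have : Nontrivial (EuclideanSpace ℝ (Fin n)) := by
    have : Nonempty (Fin n) := ⟨⟨0, by omega⟩⟩
    infer_instance
  obtain ⟨M, hM, hf⟩ := schwartz_bd n f
  have hrhs := rhs_int n hn γ hγ f
  have hW := W_int n hn ε hε
  have hmf := mf_int n hn γ hγ
  have hfm : Measurable f := f.continuous.measurable
  have hWm : Measurable (fun x : EuclideanSpace ℝ (Fin n) => h n ε ‖x‖) :=
    (cont_h n ε hε).measurable
  have hkm : Measurable (fun y : EuclideanSpace ℝ (Fin n) => ‖y‖ ^ (-((n : ℝ) + γ))) :=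
    measurable_norm.pow_const _
  have hkm2 : Measurable (fun q : EuclideanSpace ℝ (Fin n) × EuclideanSpace ℝ (Fin n) =>
      ‖q.1 - q.2‖ ^ (-((n : ℝ) + γ))) :=
    hkm.comp (measurable_fst.sub measurable_snd)
  -- integrability of `g k`
  have hgk : Integrable (fun z : EuclideanSpace ℝ (Fin n) =>
      (f 0 - f z) * ‖z‖ ^ (-((n : ℝ) + γ))) := by
    refine (hmf.const_mul M).mono' ((measurable_const.sub hfm).mul hkm).aestronglyMeasurable
      (Filter.Eventually.of_forall fun z => ?_)
    have hfz := hf 0 z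
    rw [zero_sub, norm_neg] at hfz
    have hk : 0 ≤ ‖z‖ ^ (-((n : ℝ) + γ)) := by positivity
    rw [norm_mul, Real.norm_of_nonneg hk, Real.norm_eq_abs, ← mul_assoc]
    gcongr
  -- the functions on the product
  obtain ⟨P, hP⟩ : ∃ P : EuclideanSpace ℝ (Fin n) × EuclideanSpace ℝ (Fin n) → ℝ,
    P = fun q => h n ε ‖q.2‖ * ((f q.2 - f q.1) * ‖q.1 - q.2‖ ^ (-((n : ℝ) + γ))) := ⟨_, rfl⟩
  obtain ⟨R, hR⟩ : ∃ R : EuclideanSpace ℝ (Fin n) × EuclideanSpace ℝ (Fin n) → ℝ,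
    R = fun q => (f 0 - f q.1) * Q n γ ε q.1 q.2 := ⟨_, rfl⟩
  obtain ⟨G, hG⟩ : ∃ G : EuclideanSpace ℝ (Fin n) × EuclideanSpace ℝ (Fin n) → ℝ,
    G = fun q => ((f 0 - f q.1) * ‖q.1‖ ^ (-((n : ℝ) + γ))) * h n ε ‖q.2‖ := ⟨_, rfl⟩
  have hGi : Integrable G (volume.prod volume) := by
    rw [hG]; exact hgk.mul_prod hW
  have hPi : Integrable P (volume.prod volume) := by
    have hc := (hW.convolution_integrand (ContinuousLinearMap.mul ℝ ℝ) hmf).const_mul M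
    refine hc.mono' ?_ (Filter.Eventually.of_forall fun q => ?_)
    · rw [hP]
      refine Measurable.aestronglyMeasurable ?_
      exact (hWm.comp measurable_snd).mul
        (((hfm.comp measurable_snd).sub (hfm.comp measurable_fst)).mul hkm2)
    · rw [hP]
      simp only [ContinuousLinearMap.mul_apply']
      have hfz := hf q.2 q.1
      rw [norm_sub_rev] at hfz
      have hk : 0 ≤ ‖q.1 - q.2‖ ^ (-((n : ℝ) + γ)) := by positivity
      have hw := h_nonneg n ε ‖q.2‖ hε (norm_nonneg _)
      rw [norm_mul, norm_mul, Real.norm_of_nonneg hk, Real.norm_of_nonneg hw, Real.norm_eq_abs]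
      calc _ ≤ h n ε ‖q.2‖ * ((M * min 1 ‖q.1 - q.2‖) * ‖q.1 - q.2‖ ^ (-((n : ℝ) + γ))) := by
            gcongr
        _ = _ := by ring
  have hRm : AEStronglyMeasurable R (volume.prod volume) := by
    rw [hR]
    refine Measurable.aestronglyMeasurable ?_
    exact (measurable_const.sub (hfm.comp measurable_fst)).mul (meas_Q n γ ε hε)
  have hRz : ∀ z : EuclideanSpace ℝ (Fin n), ∫ x, ‖R (z, x)‖ = |f 0 - f z| * ∫ x, ‖Q n γ ε z x‖ := by
    intro z
    rw [hR]
    simp only [norm_mul, Real.norm_eq_abs]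
    rw [integral_const_mul]
  have hRbd : ∀ᵐ z : EuclideanSpace ℝ (Fin n), ∫ x, ‖R (z, x)‖ ≤
      C * (|f 0 - f z| * (Real.log (Real.exp 1 + 1 / ‖z‖) * ‖z‖ ^ (-((n : ℝ) + γ)))) := by
    filter_upwards [Measure.ae_ne volume (0 : EuclideanSpace ℝ (Fin n))] with z hz
    rw [hRz]
    have := mul_le_mul_of_nonneg_left (hK ε hε z hz).2 (abs_nonneg (f 0 - f z))
    linarith
  have hRi2 : Integrable (fun z : EuclideanSpace ℝ (Fin n) => ∫ x, ‖R (z, x)‖) := by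
    refine (hrhs.const_mul C).mono' hRm.norm.integral_prod_right' ?_
    filter_upwards [hRbd] with z hz
    rw [Real.norm_of_nonneg (integral_nonneg fun x => norm_nonneg _)]
    exact hz
  have hRi : Integrable R (volume.prod volume) := by
    rw [integrable_prod_iff hRm]
    refine ⟨?_, hRi2⟩
    filter_upwards [Measure.ae_ne volume (0 : EuclideanSpace ℝ (Fin n))] with z hz
    rw [hR]
    exact (hK ε hε z hz).1.const_mul (f 0 - f z)
  have hRle : |∫ q, R q ∂(volume.prod volume)| ≤ C * ∫ z : EuclideanSpace ℝ (Fin n),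
      |f 0 - f z| * (Real.log (Real.exp 1 + 1 / ‖z‖) * ‖z‖ ^ (-((n : ℝ) + γ))) := by
    calc _ ≤ ∫ q, ‖R q‖ ∂(volume.prod volume) := norm_integral_le_integral_norm R
      _ = ∫ z, ∫ x, ‖R (z, x)‖ := integral_prod _ hRi.norm
      _ ≤ ∫ z : EuclideanSpace ℝ (Fin n),
          C * (|f 0 - f z| * (Real.log (Real.exp 1 + 1 / ‖z‖) * ‖z‖ ^ (-((n : ℝ) + γ)))) :=
        integral_mono_ae hRi2 (hrhs.const_mul C) hRbd
      _ = _ := integral_const_mul _ _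
  -- symmetrisation
  have hsym : ∫ q, P q ∂(volume.prod volume) = ∫ q, (G q - R q) ∂(volume.prod volume) := by
    have s1 : ∫ q, P q.swap ∂(volume.prod volume) = ∫ q, P q ∂(volume.prod volume) :=
      integral_prod_swap P
    have s2 : ∫ q, (G q.swap - R q.swap) ∂(volume.prod volume) =
        ∫ q, (G q - R q) ∂(volume.prod volume) :=
      integral_prod_swap (fun q => G q - R q)
    have a1 := integral_add hPi hPi.swap
    have a2 := integral_add (hGi.sub hRi) (hGi.sub hRi).swap
    have e : ∫ q, (P q + (P ∘ Prod.swap) q) ∂(volume.prod volume) =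
        ∫ q, ((G - R) q + ((G - R) ∘ Prod.swap) q) ∂(volume.prod volume) := by
      congr 1
      funext q
      simp only [hP, hG, hR, Q, Function.comp_apply, Pi.sub_apply, Prod.fst_swap, Prod.snd_swap]
      rw [norm_sub_rev q.2 q.1]
      ring
    rw [a1, a2] at e
    simp only [Function.comp_apply, Pi.sub_apply] at e
    rw [s1, s2] at e
    linarith
  have hT : ∀ x : EuclideanSpace ℝ (Fin n),
      ((∫ y : EuclideanSpace ℝ (Fin n), (f 0 - f (0 + y)) / ‖y‖ ^ ((n : ℝ) + γ)) -
            ∫ y : EuclideanSpace ℝ (Fin n), (f x - f (x + y)) / ‖y‖ ^ ((n : ℝ) + γ)) *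
          h n ε ‖x‖ = (∫ z, G (z, x)) - ∫ z, P (z, x) := by
    intro x
    have g1 : ∫ z, G (z, x) =
        (∫ y : EuclideanSpace ℝ (Fin n), (f 0 - f (0 + y)) / ‖y‖ ^ ((n : ℝ) + γ)) * h n ε ‖x‖ := by
      rw [hG]
      simp only
      rw [integral_mul_const]
      congr 2
      funext y
      rw [zero_add, Real.rpow_neg (norm_nonneg _), div_eq_mul_inv]
    have g2 : ∫ z, P (z, x) = h n ε ‖x‖ *
        (∫ y : EuclideanSpace ℝ (Fin n), (f x - f (x + y)) / ‖y‖ ^ ((n : ℝ) + γ)) := by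
      rw [hP]
      simp only
      rw [integral_const_mul, ← integral_add_left_eq_self _ x]
      congr 2
      funext y
      rw [add_sub_cancel_left, Real.rpow_neg (norm_nonneg _), div_eq_mul_inv]
    rw [g1, g2]; ring
  simp only [hT]
  have gi := hGi.integral_prod_right
  have pi := hPi.integral_prod_right
  refine ⟨gi.sub pi, ?_⟩
  rw [integral_sub gi pi, ← integral_prod_symm _ hGi, ← integral_prod_symm _ hPi, hsym,
    integral_sub hGi hRi, sub_sub_cancel]
  exact hRle

lemma h_tendsto (n : ℕ) (t : ℝ) (ht : 0 < t) :
    Filter.Tendsto (fun j : ℕ => h n (1 / ((j : ℝ) + 1)) t) Filter.atTop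
      (nhds (Real.exp (-t) * t ^ (-(n : ℝ)))) := by
  unfold h
  refine Filter.Tendsto.const_mul _ ?_
  have h1 : Filter.Tendsto (fun j : ℕ => t + 1 / ((j : ℝ) + 1)) Filter.atTop (nhds t) := by
    simpa using (tendsto_one_div_add_atTop_nhds_zero_nat (𝕜 := ℝ)).const_add t
  exact h1.rpow_const (Or.inl ht.ne')

end DWI

/-- Weighted inequality for the dissipation term: with
`Λ^γ f(x) = ∫ (f(x) − f(x+y))/|y|^{n+γ} dy` (normalization constant removed),
`|∫ (Λ^γ f(0) − Λ^γ f(x)) e^{−|x|}/|x|^n dx| ≤ C ∫ |f(0)−f(x)| ln(e+1/|x|)/|x|^{n+γ} dx`. -/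
theorem dissipation_weighted_inequality (n : ℕ) (hn : 2 ≤ n) (γ : ℝ)
    (hγ : γ ∈ Set.Ioo (0 : ℝ) 1) :
    ∃ C > (0 : ℝ), ∀ (f : SchwartzMap (EuclideanSpace ℝ (Fin n)) ℝ),
      |∫ x : EuclideanSpace ℝ (Fin n),
          ((∫ y : EuclideanSpace ℝ (Fin n), (f 0 - f (0 + y)) / ‖y‖ ^ ((n : ℝ) + γ)) -
            ∫ y : EuclideanSpace ℝ (Fin n), (f x - f (x + y)) / ‖y‖ ^ ((n : ℝ) + γ)) *
          Real.exp (-‖x‖) / ‖x‖ ^ (n : ℝ)| ≤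
        C * ∫ x : EuclideanSpace ℝ (Fin n),
          |f 0 - f x| * Real.log (Real.exp 1 + 1 / ‖x‖) / ‖x‖ ^ ((n : ℝ) + γ) := by
  obtain ⟨C, hC, hA⟩ := DWI.approx n hn γ hγ
  refine ⟨C, hC, fun f => ?_⟩
  have : Nontrivial (EuclideanSpace ℝ (Fin n)) := by
    have : Nonempty (Fin n) := ⟨⟨0, by omega⟩⟩
    infer_instance
  have hrhs : ∫ x : EuclideanSpace ℝ (Fin n),
      |f 0 - f x| * Real.log (Real.exp 1 + 1 / ‖x‖) / ‖x‖ ^ ((n : ℝ) + γ) =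
      ∫ z : EuclideanSpace ℝ (Fin n),
      |f 0 - f z| * (Real.log (Real.exp 1 + 1 / ‖z‖) * ‖z‖ ^ (-((n : ℝ) + γ))) := by
    congr 1
    funext z
    rw [Real.rpow_neg (norm_nonneg _), div_eq_mul_inv, mul_assoc]
  rw [hrhs]
  have hA' := hA f
  generalize (∫ y : EuclideanSpace ℝ (Fin n), (f 0 - f (0 + y)) / ‖y‖ ^ ((n : ℝ) + γ)) = a at *
  by_cases hF : Integrable (fun x : EuclideanSpace ℝ (Fin n) =>
      (a - ∫ y : EuclideanSpace ℝ (Fin n), (f x - f (x + y)) / ‖y‖ ^ ((n : ℝ) + γ)) *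
        Real.exp (-‖x‖) / ‖x‖ ^ (n : ℝ))
  · have hlim := tendsto_integral_of_dominated_convergence
      (F := fun (j : ℕ) (x : EuclideanSpace ℝ (Fin n)) =>
        (a - ∫ y : EuclideanSpace ℝ (Fin n), (f x - f (x + y)) / ‖y‖ ^ ((n : ℝ) + γ)) *
          DWI.h n (1 / ((j : ℝ) + 1)) ‖x‖)
      (f := fun x : EuclideanSpace ℝ (Fin n) =>
        (a - ∫ y : EuclideanSpace ℝ (Fin n), (f x - f (x + y)) / ‖y‖ ^ ((n : ℝ) + γ)) *
          Real.exp (-‖x‖) / ‖x‖ ^ (n : ℝ))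
      (μ := volume) _ (fun j => (hA' (1 / ((j : ℝ) + 1)) (by positivity)).1.aestronglyMeasurable)
      hF.norm (fun j => by
        filter_upwards [Measure.ae_ne volume (0 : EuclideanSpace ℝ (Fin n))] with x hx
        have hx0 : 0 < ‖x‖ := norm_pos_iff.mpr hx
        rw [mul_div_assoc, norm_mul, norm_mul]
        refine mul_le_mul_of_nonneg_left ?_ (norm_nonneg _)
        rw [Real.norm_of_nonneg (DWI.h_nonneg n _ _ (by positivity) hx0.le),
          Real.norm_of_nonneg (by positivity), div_eq_mul_inv (Real.exp _), ← Real.rpow_neg hx0.le]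
        unfold DWI.h
        gcongr _ * ?_
        have : 0 < 1 / ((j : ℝ) + 1) := by positivity
        exact Real.rpow_le_rpow_of_nonpos hx0 (by linarith) (by simp)) (by
        filter_upwards [Measure.ae_ne volume (0 : EuclideanSpace ℝ (Fin n))] with x hx
        have hx0 : 0 < ‖x‖ := norm_pos_iff.mpr hx
        rw [mul_div_assoc, div_eq_mul_inv (Real.exp _), ← Real.rpow_neg hx0.le]
        exact (DWI.h_tendsto n ‖x‖ hx0).const_mul _)
    exact le_of_tendsto' hlim.abs fun j => (hA' (1 / ((j : ℝ) + 1)) (by positivity)).2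
  · rw [integral_undef hF, abs_zero]
    refine mul_nonneg hC.le (integral_nonneg fun z => ?_)
    have := DWI.one_le_L ‖z‖ (norm_nonneg _)
    simp only [Pi.zero_apply]
    positivity
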